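/- arXiv:1706.00518 — 5 statements merged into one kernel-verified Lean document; each statement's English description precedes it below -/
import Mathlib

section
/- Let V be a vector space over F of finite positive dimension and let C, D ∈ End(V) satisfy (qCD − q^{−1}DC)/(q − q^{−1}) = I. Then for every nonzero θ ∈ F, the eigenspaces V_C(θ) and V_D(θ^{−1}) have the same dimension. -/
/-!
Put `r = q²`, `Y = DC - 1` and `Z = CD - 1`. The relation says `Y = r Z`.

For any `C` and `D`, the minimal polynomials of `Y` and `Z` each divide `1 + X` times the other, as
`D f(Z) C = f(Y) (1 + Y)` and `C f(Y) D = f(Z) (1 + Z)`. Since `1 + X` is prime, one of them divides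
the other. Here they have the same degree because `Y = r Z`, so they coincide. The roots of this
polynomial are thus stable under multiplication by `r`, which is not a root of unity: the polynomial
is a power of `X`, and `Y` and `Z` are nilpotent.

Let `e` be the `q`-exponential series, normalised by `e(X) = (1 + X) e(rX)`, and `E = e(Y)`. Then
`D E C = e(rY) DC = e(rY) (1 + Y) = E`. As `CD = 1 + Z` and `DC = 1 + Y` are invertible, so is `D`,
and `C` is conjugate to `D⁻¹`.
-/

noncomputable section

open Polynomial

section Aeval

lemma semiconjBy_aeval {R A : Type*} [CommSemiring R] [Semiring A] [Algebra R A] {a x y : A}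
    (h : SemiconjBy a x y) (p : R[X]) : SemiconjBy a (aeval x p) (aeval y p) := by
  induction p using Polynomial.induction_on' with
  | add p q hp hq => simpa only [map_add] using hp.add_right hq
  | monomial n c =>
    simpa only [aeval_monomial] using
      SemiconjBy.mul_right (Algebra.commutes c a).symm (h.pow_right n)

lemma aeval_smul_eq_aeval_comp {R A : Type*} [CommSemiring R] [Semiring A] [Algebra R A] (r : R)
    (x : A) (p : R[X]) : aeval (r • x) p = aeval x (p.comp (C r * X)) := by
  rw [aeval_comp, map_mul, aeval_C, aeval_X, Algebra.smul_def]

lemma isUnit_aeval_of_isNilpotent {R A : Type*} [CommRing R] [Ring A] [Algebra R A] {x : A}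
    (hx : IsNilpotent x) {p : R[X]} (hp : IsUnit (p.coeff 0)) : IsUnit (aeval x p) := by
  have hsplit : aeval x p = x * aeval x p.divX + algebraMap R A (p.coeff 0) := by
    conv_lhs => rw [← X_mul_divX_add p, map_add, map_mul, aeval_X, aeval_C]
  have hcomm : Commute x (aeval x p.divX) := semiconjBy_aeval (Commute.refl x) _
  rw [hsplit]
  exact (hcomm.isNilpotent_mul_right hx).isUnit_add_right_of_commute
    (hp.map (algebraMap R A)) (Algebra.commutes _ _).symm

lemma isIntegral_sub_algebraMap {R A : Type*} [CommRing R] [Ring A] [Algebra R A] {x : A}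
    (hx : IsIntegral R x) (c : R) : IsIntegral R (x - algebraMap R A c) := by
  obtain ⟨p, hp, hpx⟩ := hx
  refine ⟨p.comp (X + C c), hp.comp_X_add_C c, ?_⟩
  rw [← aeval_def, aeval_comp, map_add, aeval_X, aeval_C, sub_add_cancel, aeval_def, hpx]

end Aeval

section ScaleRoots

lemma eq_X_pow_of_scaleRoots_eq {R : Type*} [CommRing R] [IsDomain R] {r : R}
    (hr : ¬IsOfFinOrder r) {p : R[X]} (hp : p.Monic) (h : p.scaleRoots r = p) :
    p = X ^ p.natDegree := by
  ext n
  rw [coeff_X_pow]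
  split_ifs with hn
  · rw [hn, hp.coeff_natDegree]
  rcases lt_or_gt_of_ne hn with hlt | hgt
  · have hcoeff : p.coeff n * r ^ (p.natDegree - n) = p.coeff n := by
      rw [← coeff_scaleRoots, h]
    refine (mul_right_eq_self₀.mp hcoeff).resolve_left fun hpow => hr ?_
    exact isOfFinOrder_iff_pow_eq_one.mpr ⟨_, Nat.sub_pos_of_lt hlt, hpow⟩
  · exact coeff_eq_zero_of_natDegree_lt hgt

variable {F A : Type*} [Field F] [Ring A] [Algebra F A]

lemma minpoly_smul_dvd_scaleRoots (r : F) (x : A) :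
    minpoly F (r • x) ∣ (minpoly F x).scaleRoots r := by
  rw [Algebra.smul_def]
  exact minpoly.dvd F _ (scaleRoots_aeval_eq_zero (minpoly.aeval F x))

lemma natDegree_minpoly_smul_le {x : A} (hx : IsIntegral F x) (r : F) :
    (minpoly F (r • x)).natDegree ≤ (minpoly F x).natDegree := by
  rw [← natDegree_scaleRoots (minpoly F x) r]
  exact natDegree_le_of_dvd (minpoly_smul_dvd_scaleRoots r x)
    (scaleRoots_ne_zero (minpoly.ne_zero hx) r)

lemma natDegree_minpoly_smul {r : F} (hr0 : r ≠ 0) {x : A} (hx : IsIntegral F x) :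
    (minpoly F (r • x)).natDegree = (minpoly F x).natDegree := by
  refine (natDegree_minpoly_smul_le hx r).antisymm ?_
  simpa only [inv_smul_smul₀ hr0] using natDegree_minpoly_smul_le (hx.smul r) r⁻¹

lemma minpoly_smul {r : F} (hr0 : r ≠ 0) {x : A} (hx : IsIntegral F x) :
    minpoly F (r • x) = (minpoly F x).scaleRoots r := by
  symm
  refine eq_of_monic_of_dvd_of_natDegree_le (minpoly.monic (hx.smul r))
    ((monic_scaleRoots_iff r).mpr (minpoly.monic hx)) (minpoly_smul_dvd_scaleRoots r x) ?_
  rw [natDegree_scaleRoots, natDegree_minpoly_smul hr0 hx]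

lemma isNilpotent_of_minpoly_smul_eq {r : F} (hr0 : r ≠ 0) (hr : ¬IsOfFinOrder r) {x : A}
    (hx : IsIntegral F x) (h : minpoly F (r • x) = minpoly F x) : IsNilpotent x := by
  have hX : minpoly F x = X ^ (minpoly F x).natDegree :=
    eq_X_pow_of_scaleRoots_eq hr (minpoly.monic hx) (by rw [← minpoly_smul hr0 hx, h])
  refine ⟨(minpoly F x).natDegree, ?_⟩
  rw [← aeval_X_pow (R := F) x, ← hX, minpoly.aeval]

end ScaleRoots

section MulComm

lemma semiconjBy_mul_sub_algebraMap {R A : Type*} [CommRing R] [Ring A] [Algebra R A] (a b : A)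
    (c : R) : SemiconjBy a (b * a - algebraMap R A c) (a * b - algebraMap R A c) :=
  SemiconjBy.sub_right (mul_assoc a b a).symm (Algebra.commutes c a).symm

lemma dvd_or_dvd_of_dvd_prime_mul {M : Type*} [CommMonoidWithZero M] [IsCancelMulZero M]
    {π p s : M} (hπ : Prime π) (hp : p ∣ π * s) (hs : s ∣ π * p) : p ∣ s ∨ s ∣ p := by
  rcases eq_or_ne p 0 with rfl | hp0
  · exact Or.inr (dvd_zero s)
  obtain ⟨a, ha⟩ := hp
  obtain ⟨b, hb⟩ := hs
  have hab : a * b = π * π := mul_left_cancel₀ hp0 <| by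
    rw [← mul_assoc, ← ha, mul_assoc, ← hb, mul_left_comm p, mul_comm p]
  rcases hπ.dvd_or_dvd (hab ▸ dvd_mul_right π π) with ⟨a', rfl⟩ | ⟨b', rfl⟩
  · exact Or.inl ⟨a', mul_left_cancel₀ hπ.ne_zero (ha.trans (mul_left_comm _ _ _))⟩
  · exact Or.inr ⟨b', mul_left_cancel₀ hπ.ne_zero (hb.trans (mul_left_comm _ _ _))⟩

variable {F A : Type*} [Field F] [Ring A] [Algebra F A]

lemma minpoly_mul_sub_algebraMap_dvd (a b : A) (c : F) :
    minpoly F (a * b - algebraMap F A c) ∣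
      (X + C c) * minpoly F (b * a - algebraMap F A c) := by
  apply minpoly.dvd
  rw [mul_comm, map_mul, map_add, aeval_X, aeval_C, sub_add_cancel, ← mul_assoc,
    ← (semiconjBy_aeval (semiconjBy_mul_sub_algebraMap a b c) _).eq, minpoly.aeval, mul_zero,
    zero_mul]

lemma minpoly_mul_sub_algebraMap_comm {a b : A} {c : F}
    (hab : IsIntegral F (a * b - algebraMap F A c)) (hba : IsIntegral F (b * a - algebraMap F A c))
    (hdeg : (minpoly F (a * b - algebraMap F A c)).natDegree =
      (minpoly F (b * a - algebraMap F A c)).natDegree) :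
    minpoly F (a * b - algebraMap F A c) = minpoly F (b * a - algebraMap F A c) := by
  have hprime : Prime (X + C c) := by simpa using prime_X_sub_C (-c)
  rcases dvd_or_dvd_of_dvd_prime_mul hprime (minpoly_mul_sub_algebraMap_dvd a b c)
    (minpoly_mul_sub_algebraMap_dvd b a c) with hdvd | hdvd
  · exact (eq_of_monic_of_dvd_of_natDegree_le (minpoly.monic hab) (minpoly.monic hba) hdvd
      hdeg.ge).symm
  · exact eq_of_monic_of_dvd_of_natDegree_le (minpoly.monic hba) (minpoly.monic hab) hdvd hdeg.le

end MulComm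

section QExponential

variable {F A : Type*} [Field F] [Ring A] [Algebra F A]

/-- The coefficients of the `q`-exponential: the power series `e` with constant term `1` and
`e(X) = (1 + X) e(rX)`. The formula is meaningful when `r` is not a root of unity. -/
def qExpCoeff (r : F) (n : ℕ) : F :=
  ∏ k ∈ Finset.range n, r ^ k / (1 - r ^ (k + 1))

/-- The `q`-exponential truncated to degree less than `N`, which is all that matters when it is
evaluated at an element whose `N`-th power vanishes. -/
def qExpTrunc (r : F) (N : ℕ) : F[X] :=
  ∑ n ∈ Finset.range N, C (qExpCoeff r n) * X ^ n

lemma one_sub_pow_mul_qExpCoeff_succ {r : F} (hr : ¬IsOfFinOrder r) (n : ℕ) :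
    (1 - r ^ (n + 1)) * qExpCoeff r (n + 1) = qExpCoeff r n * r ^ n := by
  have hne : 1 - r ^ (n + 1) ≠ 0 := sub_ne_zero.mpr fun h =>
    hr (isOfFinOrder_iff_pow_eq_one.mpr ⟨n + 1, n.succ_pos, h.symm⟩)
  rw [qExpCoeff, Finset.prod_range_succ, ← qExpCoeff]
  field_simp

lemma one_add_X_mul_qExpTrunc_comp {r : F} (hr : ¬IsOfFinOrder r) (N : ℕ) :
    (1 + X) * (qExpTrunc r N).comp (C r * X) =
      qExpTrunc r N + C ((1 - r ^ N) * qExpCoeff r N) * X ^ N := by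
  induction N with
  | zero => simp [qExpTrunc]
  | succ N ih =>
    have hsucc : qExpTrunc r (N + 1) = qExpTrunc r N + C (qExpCoeff r N) * X ^ N :=
      Finset.sum_range_succ _ N
    rw [hsucc, add_comp, mul_add, ih, one_sub_pow_mul_qExpCoeff_succ hr]
    simp only [mul_comp, C_comp, X_pow_comp, mul_pow, map_mul, map_sub, map_one, map_pow]
    ring

lemma coeff_zero_qExpTrunc (r : F) {N : ℕ} (hN : 0 < N) : (qExpTrunc r N).coeff 0 = 1 := by
  simp [qExpTrunc, finsetSum_coeff, coeff_X_pow, qExpCoeff, hN]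

lemma aeval_smul_qExpTrunc_mul {r : F} (hr : ¬IsOfFinOrder r) {x : A} {N : ℕ} (hx : x ^ N = 0) :
    aeval (r • x) (qExpTrunc r N) * (1 + x) = aeval x (qExpTrunc r N) := by
  have h := congrArg (aeval x) (one_add_X_mul_qExpTrunc_comp hr N)
  rw [mul_comm] at h
  simpa [aeval_smul_eq_aeval_comp, hx] using h

end QExponential

section QWeyl

variable {F A : Type*} [Field F] [Ring A] [Algebra F A] {r : F} {C D : A}

lemma mul_sub_one_eq_sq_smul {q : F} (hq0 : q ≠ 0) (hq2 : q ^ 2 ≠ 1)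
    (hCD : (q - q⁻¹)⁻¹ • (q • (C * D) - q⁻¹ • (D * C)) = 1) :
    D * C - 1 = q ^ 2 • (C * D - 1) := by
  have hne : q - q⁻¹ ≠ 0 := by
    rwa [sub_ne_zero, Ne, ← mul_eq_one_iff_eq_inv₀ hq0, ← pow_two]
  rw [inv_smul_eq_iff₀ hne] at hCD
  linear_combination (norm := skip) (-q) • hCD
  match_scalars <;> field_simp <;> ring

lemma isNilpotent_mul_sub_one (hr0 : r ≠ 0) (hr : ¬IsOfFinOrder r)
    (hrel : D * C - 1 = r • (C * D - 1)) (hint : IsIntegral F (C * D)) :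
    IsNilpotent (C * D - 1) := by
  have hZ : IsIntegral F (C * D - 1) := by
    simpa only [map_one] using isIntegral_sub_algebraMap hint (1 : F)
  refine isNilpotent_of_minpoly_smul_eq hr0 hr hZ ?_
  have hcomm := minpoly_mul_sub_algebraMap_comm (F := F) (a := D) (b := C) (c := 1)
  rw [map_one, hrel] at hcomm
  exact hcomm (hZ.smul r) hZ (natDegree_minpoly_smul hr0 hZ)

lemma exists_isUnit_mul_mul_eq (hr : ¬IsOfFinOrder r) (hrel : D * C - 1 = r • (C * D - 1))
    (hnil : IsNilpotent (D * C - 1)) : ∃ E : A, IsUnit E ∧ D * E * C = E := by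
  have hZY : SemiconjBy D (C * D - 1) (D * C - 1) := by
    simpa only [map_one] using semiconjBy_mul_sub_algebraMap D C (1 : F)
  have hsemi : SemiconjBy D (D * C - 1) (r • (D * C - 1)) := by
    nth_rw 1 [hrel]
    rw [SemiconjBy, mul_smul_comm, hZY.eq, smul_mul_assoc]
  obtain ⟨N, hN⟩ := hnil
  have hN' : (D * C - 1) ^ (N + 1) = 0 := pow_eq_zero_of_le N.le_succ hN
  refine ⟨aeval (D * C - 1) (qExpTrunc r (N + 1)), isUnit_aeval_of_isNilpotent ⟨N, hN⟩ ?_, ?_⟩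
  · rw [coeff_zero_qExpTrunc r N.succ_pos]
    exact isUnit_one
  calc
    D * aeval (D * C - 1) (qExpTrunc r (N + 1)) * C
        = aeval (r • (D * C - 1)) (qExpTrunc r (N + 1)) * (1 + (D * C - 1)) := by
      rw [(semiconjBy_aeval hsemi _).eq, mul_assoc, add_sub_cancel]
    _ = aeval (D * C - 1) (qExpTrunc r (N + 1)) := aeval_smul_qExpTrunc_mul hr hN'

theorem exists_units_eq_and_isConj_inv (hr0 : r ≠ 0) (hr : ¬IsOfFinOrder r)
    (hrel : D * C - 1 = r • (C * D - 1)) (hint : IsIntegral F (C * D)) :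
    ∃ u : Aˣ, (u : A) = D ∧ IsConj C ↑u⁻¹ := by
  have hnil := isNilpotent_mul_sub_one hr0 hr hrel hint
  obtain ⟨E, hE, hDEC⟩ := exists_isUnit_mul_mul_eq hr hrel (hrel ▸ hnil.smul r)
  have hleft : ∃ B, B * D = 1 := by
    have hunit : IsUnit (C * D) := by simpa only [sub_add_cancel] using hnil.isUnit_add_one
    obtain ⟨B, hB⟩ := hunit.exists_left_inv
    exact ⟨B * C, by rw [mul_assoc, hB]⟩
  have hright : ∃ B, D * B = 1 := by
    obtain ⟨B, hB⟩ := hE.exists_right_inv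
    exact ⟨E * C * B, by rw [← mul_assoc, ← mul_assoc, hDEC, hB]⟩
  obtain ⟨u, rfl⟩ := isUnit_iff_exists_and_exists.mpr ⟨hright, hleft⟩
  refine ⟨u, rfl, hE.unit, ?_⟩
  rw [SemiconjBy, hE.unit_spec, Units.eq_inv_mul_iff_mul_eq, ← mul_assoc, hDEC]

end QWeyl

section Eigenspace

open Module End

lemma rank_eigenspace_eq_of_isConj {R M : Type*} [CommRing R] [AddCommGroup M] [Module R M]
    {f g : End R M} (h : IsConj f g) (μ : R) :
    Module.rank R (f.eigenspace μ) = Module.rank R (g.eigenspace μ) := by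
  obtain ⟨u, hu⟩ := h
  let e : M ≃ₗ[R] M := LinearMap.GeneralLinearGroup.toLinearEquiv u
  have he (x : M) : e (f x) = g (e x) := LinearMap.congr_fun hu.eq x
  have hcomap : f.eigenspace μ = (g.eigenspace μ).comap (e : M →ₗ[R] M) := by
    ext x
    simp [← he, ← map_smul]
  rw [hcomap]
  exact (e.ofSubmodule' (g.eigenspace μ)).rank_eq

lemma eigenspace_units_inv {R M : Type*} [CommRing R] [AddCommGroup M] [Module R M]
    (u : (End R M)ˣ) (μ : Rˣ) :
    eigenspace (↑u⁻¹ : End R M) (μ : R) = eigenspace (u : End R M) ↑μ⁻¹ := by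
  ext x
  have hu (y : M) : u.val (u⁻¹.val y) = y := LinearMap.congr_fun u.mul_inv y
  have hu' (y : M) : u⁻¹.val (u.val y) = y := LinearMap.congr_fun u.inv_mul y
  rw [mem_eigenspace_iff, mem_eigenspace_iff, ← Units.smul_def, ← Units.smul_def,
    eq_inv_smul_iff]
  calc
    u⁻¹.val x = μ • x ↔ x = u.val (μ • x) :=
      ⟨fun h => by rw [← h, hu], fun h => by rw [← hu' (μ • x), ← h]⟩
    _ ↔ μ • u.val x = x := by rw [Units.smul_def, map_smul, ← Units.smul_def, eq_comm]

end Eigenspace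

theorem stmt3_general {F V : Type*} [Field F] [AddCommGroup V] [Module F V] {q : F} (hq0 : q ≠ 0)
    (hq1 : ∀ n : ℕ, 0 < n → q ^ n ≠ 1) {C D : Module.End F V} (hint : IsIntegral F (C * D))
    (hCD : (q - q⁻¹)⁻¹ • (q • (C * D) - q⁻¹ • (D * C)) = (1 : Module.End F V))
    {θ : F} (hθ : θ ≠ 0) :
    Module.rank F (Module.End.eigenspace C θ) = Module.rank F (Module.End.eigenspace D θ⁻¹) := by
  have hq : ¬IsOfFinOrder q := by simpa [isOfFinOrder_iff_pow_eq_one] using hq1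
  have hr : ¬IsOfFinOrder (q ^ 2) := by simpa [isOfFinOrder_pow] using hq
  have hrel := mul_sub_one_eq_sq_smul hq0 (hq1 2 two_pos) hCD
  obtain ⟨u, rfl, hconj⟩ := exists_units_eq_and_isConj_inv (pow_ne_zero 2 hq0) hr hrel hint
  have hinv : (↑u⁻¹ : Module.End F V).eigenspace θ = (u : Module.End F V).eigenspace θ⁻¹ :=
    eigenspace_units_inv u (Units.mk0 θ hθ)
  rw [rank_eigenspace_eq_of_isConj hconj, hinv]

theorem stmt3 (F : Type) [Field F] [IsAlgClosed F] [CharZero F] (q : F) (hq0 : q ≠ 0)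
    (hq1 : ∀ n : ℕ, 0 < n → q ^ n ≠ 1)
    (V : Type) [AddCommGroup V] [Module F V] [FiniteDimensional F V]
    (hV : 0 < Module.finrank F V) (C D : Module.End F V)
    (hCD : (q - q⁻¹)⁻¹ • (q • (C * D) - q⁻¹ • (D * C)) = (1 : Module.End F V))
    (θ : F) (hθ : θ ≠ 0) :
    Module.finrank F ↥(Module.End.eigenspace C θ) =
      Module.finrank F ↥(Module.End.eigenspace D θ⁻¹) :=
  congrArg Cardinal.toNat (stmt3_general hq0 hq1 (IsIntegral.of_finite F _) hCD hθ)
end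
end

section
/- Let V be a finite-dimensional vector space over F, let C, D ∈ End(V), and let θ ∈ F be nonzero. Then the following are equivalent: (i) (C³D − [3]_q C²DC + [3]_q CDC² − DC³)v = 0 for every v in the eigenspace V_C(θ) = ker(C − θI); (ii) D V_C(θ) ⊆ V_C(q²θ) + V_C(θ) + V_C(q^{−2}θ). -/
/-!
On a `θ`-eigenvector `v` of `C`, each factor `C` to the right of `D` becomes the scalar `θ`, so the
cubic expression in `C` and `D` sends `v` to `P(C) (D v)` with
`P = X³ - [3] θ X² + [3] θ² X - θ³`. Since `[3] = q² + 1 + q⁻²`, the roots of `P` are `q² θ`, `θ`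
and `q⁻² θ`. They are distinct, so the linear factors of `P` are pairwise coprime, and `ker P(C)` is
the sum of the three eigenspaces.
-/

noncomputable section

open Polynomial Module.End

section KernelDecomposition

theorem ker_aeval_prod_eq_iSup_of_pairwise_isCoprime {R M ι : Type*} [CommRing R]
    [AddCommGroup M] [Module R M] (f : Module.End R M) (s : Finset ι) (p : ι → R[X])
    (hp : (s : Set ι).Pairwise fun i j => IsCoprime (p i) (p j)) :
    LinearMap.ker (aeval f (∏ i ∈ s, p i)) = ⨆ i ∈ s, LinearMap.ker (aeval f (p i)) := by
  classical
  induction s using Finset.induction_on with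
  | empty => simp [one_eq_id]
  | insert a s ha ih =>
    rw [Finset.coe_insert] at hp
    have h_coprime : IsCoprime (p a) (∏ i ∈ s, p i) := IsCoprime.prod_right fun i hi =>
      hp (Set.mem_insert a _) (Set.mem_insert_of_mem a hi) (ne_of_mem_of_not_mem hi ha).symm
    rw [Finset.prod_insert ha, ← sup_ker_aeval_eq_ker_aeval_mul_of_coprime f h_coprime,
      ih (hp.mono (Set.subset_insert a _)), Finset.iSup_insert]

theorem ker_aeval_X_sub_C {R M : Type*} [CommRing R] [AddCommGroup M] [Module R M]
    (f : Module.End R M) (a : R) :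
    LinearMap.ker (aeval f (X - C a)) = eigenspace f a := by
  rw [eigenspace_def, aeval_sub, aeval_X, aeval_C, Algebra.algebraMap_eq_smul_one]

theorem ker_aeval_prod_X_sub_C {K V : Type*} [Field K] [AddCommGroup V] [Module K V]
    (f : Module.End K V) (s : Finset K) :
    LinearMap.ker (aeval f (∏ a ∈ s, (X - C a))) = ⨆ a ∈ s, eigenspace f a := by
  rw [ker_aeval_prod_eq_iSup_of_pairwise_isCoprime f s (fun a => X - C a) fun _ _ _ _ hab =>
    pairwise_coprime_X_sub_C Function.injective_id hab]
  simp only [ker_aeval_X_sub_C]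

end KernelDecomposition

section CubicSerre

/-- The left-hand side `x³y - β x²yx + β xyx² - yx³` of the cubic `q`-Serre relation between `x`
and `y`. The quantum integer `[3]_q` is replaced by an arbitrary scalar `β`. -/
def cubicSerre {R A : Type*} [CommSemiring R] [Ring A] [Algebra R A] (β : R) (x y : A) : A :=
  x ^ 3 * y - β • (x ^ 2 * y * x) + β • (x * y * x ^ 2) - y * x ^ 3

section CommRing

variable {R M : Type*} [CommRing R] [AddCommGroup M] [Module R M] {f : Module.End R M} {μ : R}
  {v : M}

theorem pow_apply_of_mem_eigenspace (hv : v ∈ eigenspace f μ) (n : ℕ) :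
    (f ^ n) v = μ ^ n • v := by
  induction n with
  | zero => simp
  | succ n ih =>
    rw [pow_succ, mul_apply, mem_eigenspace_iff.1 hv, map_smul, ih, smul_smul, pow_succ']

theorem cubicSerre_apply_of_mem_eigenspace (hv : v ∈ eigenspace f μ) (β : R)
    (g : Module.End R M) :
    cubicSerre β f g v =
      aeval f (X ^ 3 - C (β * μ) * X ^ 2 + C (β * μ ^ 2) * X - C (μ ^ 3)) (g v) := by
  simp only [cubicSerre, LinearMap.sub_apply, LinearMap.add_apply, LinearMap.smul_apply, mul_apply,
    pow_apply_of_mem_eigenspace hv, mem_eigenspace_iff.1 hv, map_smul, map_sub, map_add, aeval_mul,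
    aeval_X_pow, aeval_X, aeval_C, Module.algebraMap_end_apply, smul_smul]

theorem cubic_eq_mul_X_sub_C {s t : R} (hst : s * t = 1) (μ : R) :
    X ^ 3 - C ((s + 1 + t) * μ) * X ^ 2 + C ((s + 1 + t) * μ ^ 2) * X - C (μ ^ 3) =
      (X - C (s * μ)) * ((X - C μ) * (X - C (t * μ))) := by
  have hC : C s * C t = 1 := by rw [← C_mul, hst, C_1]
  simp only [map_mul, map_add, map_pow, map_one]
  linear_combination (C μ ^ 3 - C μ ^ 2 * X) * hC

end CommRing

theorem cubicSerre_apply_eq_zero_iff {K V : Type*} [Field K] [AddCommGroup V] [Module K V]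
    {f : Module.End K V} {t μ : K} (ht0 : t ≠ 0) (ht : t ^ 2 ≠ 1) (hμ : μ ≠ 0) {v : V}
    (hv : v ∈ eigenspace f μ) (g : Module.End K V) :
    cubicSerre (t + 1 + t⁻¹) f g v = 0 ↔
      g v ∈ eigenspace f (t * μ) ⊔ eigenspace f μ ⊔ eigenspace f (t⁻¹ * μ) := by
  classical
  have ht1 : t ≠ 1 := fun h => ht (by rw [h, one_pow])
  have h_left : t * μ ≠ μ := by rwa [Ne, mul_eq_right₀ hμ]
  have h_right : μ ≠ t⁻¹ * μ := by rwa [Ne, eq_comm, mul_eq_right₀ hμ, inv_eq_one]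
  have h_outer : t * μ ≠ t⁻¹ * μ := by
    rwa [Ne, mul_left_inj' hμ, ← mul_eq_one_iff_eq_inv₀ ht0, ← sq]
  have h_ker := ker_aeval_prod_X_sub_C f {t * μ, μ, t⁻¹ * μ}
  rw [Finset.prod_insert (by simp [h_left, h_outer]), Finset.prod_pair h_right,
    Finset.iSup_insert, Finset.iSup_insert, Finset.iSup_singleton, ← sup_assoc] at h_ker
  rw [cubicSerre_apply_of_mem_eigenspace hv, cubic_eq_mul_X_sub_C (mul_inv_cancel₀ ht0),
    ← LinearMap.mem_ker, h_ker]

end CubicSerre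

theorem pow_three_sub_inv_pow_three_div {K : Type*} [Field K] {q : K} (hq0 : q ≠ 0)
    (hq : q ^ 2 ≠ 1) :
    (q ^ 3 - q⁻¹ ^ 3) / (q - q⁻¹) = q ^ 2 + 1 + (q ^ 2)⁻¹ := by
  have hq_inv : q ≠ q⁻¹ := by rwa [Ne, ← mul_eq_one_iff_eq_inv₀ hq0, ← sq]
  rw [div_eq_iff (sub_ne_zero.2 hq_inv)]
  field_simp
  ring

theorem stmt4_general {K V : Type*} [Field K] [AddCommGroup V] [Module K V] {q θ : K}
    (hq0 : q ≠ 0) (hq : q ^ 4 ≠ 1) (hθ : θ ≠ 0) (f g : Module.End K V) :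
    (∀ v ∈ eigenspace f θ, cubicSerre ((q ^ 3 - q⁻¹ ^ 3) / (q - q⁻¹)) f g v = 0) ↔
      ∀ v ∈ eigenspace f θ,
        g v ∈ eigenspace f (q ^ 2 * θ) ⊔ eigenspace f θ ⊔ eigenspace f (q ^ (-2 : ℤ) * θ) := by
  have hq_sq : (q ^ 2) ^ 2 ≠ 1 := by rwa [← pow_mul]
  have hq2 : q ^ 2 ≠ 1 := fun h => hq_sq (by rw [h, one_pow])
  have h_zpow : q ^ (-2 : ℤ) = (q ^ 2)⁻¹ := zpow_neg_coe_of_pos q two_pos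
  rw [pow_three_sub_inv_pow_three_div hq0 hq2, h_zpow]
  exact forall₂_congr fun v hv => cubicSerre_apply_eq_zero_iff (pow_ne_zero 2 hq0) hq_sq hθ hv g

theorem stmt4 (F : Type) [Field F] [IsAlgClosed F] [CharZero F] (q : F) (hq0 : q ≠ 0)
    (hq1 : ∀ n : ℕ, 0 < n → q ^ n ≠ 1)
    (V : Type) [AddCommGroup V] [Module F V] [FiniteDimensional F V]
    (C D : Module.End F V) (θ : F) (hθ : θ ≠ 0) :
    (∀ v ∈ Module.End.eigenspace C θ,
        (C ^ 3 * D - ((q ^ 3 - (q⁻¹) ^ 3) / (q - q⁻¹)) • (C ^ 2 * D * C) +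
          ((q ^ 3 - (q⁻¹) ^ 3) / (q - q⁻¹)) • (C * D * C ^ 2) - D * C ^ 3) v = 0) ↔
      (∀ v ∈ Module.End.eigenspace C θ,
        D v ∈ Module.End.eigenspace C (q ^ 2 * θ) ⊔ Module.End.eigenspace C θ ⊔
          Module.End.eigenspace C (q ^ (-2 : ℤ) * θ)) :=
  stmt4_general hq0 (hq1 4 four_pos) hθ C D
end
end

section
/- Let V be a finite-dimensional irreducible □_q-module. Then for every nonzero θ ∈ F the eigenspaces of the actions of the generators satisfy dim V_{x_0}(θ) = dim V_{x_1}(θ^{−1}) = dim V_{x_2}(θ) = dim V_{x_3}(θ^{−1}). -/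
/-!
Let `x`, `y` be the actions of two cyclically adjacent generators and put `p = q ^ 2`. The first
defining relation reads `p (1 - x y) = 1 - y x`. Since `1 - x y` and `1 - y x` have the same
characteristic polynomial, that polynomial is invariant under scaling its roots by `p`, which is
not a root of unity; so `1 - x y` and `1 - y x` are nilpotent and power series can be evaluated at
them. The `q`-exponential satisfies `e (p t) = (1 - t) e t`, and `x g(1 - y x) = g(1 - x y) x` for
every power series `g`, whence
`x e(1 - y x) y = e(1 - x y) x y = e(p (1 - x y)) = e(1 - y x)`.
Thus `e(1 - y x)` conjugates `y⁻¹` into `x`.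
-/

noncomputable section

open FreeAlgebra

variable (F : Type) [Field F]

/-- The defining relations of the algebra `□_q` (Terwilliger), on the free algebra
with generators `x_i`, `i ∈ ℤ/4ℤ`. -/
inductive BoxRel (q : F) : FreeAlgebra F (ZMod 4) → FreeAlgebra F (ZMod 4) → Prop
  | rel1 (i : ZMod 4) : BoxRel q
      (q • (ι F i * ι F (i + 1)) - q⁻¹ • (ι F (i + 1) * ι F i))
      ((q - q⁻¹) • (1 : FreeAlgebra F (ZMod 4)))
  | rel2 (i : ZMod 4) : BoxRel q
      (ι F i ^ 3 * ι F (i + 2) +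
        ((q ^ 3 - (q⁻¹) ^ 3) / (q - q⁻¹)) • (ι F i * ι F (i + 2) * ι F i ^ 2))
      (((q ^ 3 - (q⁻¹) ^ 3) / (q - q⁻¹)) • (ι F i ^ 2 * ι F (i + 2) * ι F i) +
        ι F (i + 2) * ι F i ^ 3)

/-- The algebra `□_q`, presented by generators and relations. -/
abbrev BoxQ (q : F) : Type := RingQuot (BoxRel F q)

/-- The generators `x_i` of `□_q`. -/
def bx (q : F) (i : ZMod 4) : BoxQ F q :=
  RingQuot.mkAlgHom F (BoxRel F q) (ι F i)

/-- `f` acts semisimply: `V` is spanned by the eigenspaces of `f`. -/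
def SemisimpleOn {V : Type} [AddCommGroup V] [Module F V] (f : Module.End F V) : Prop :=
  (⨆ θ : F, Module.End.eigenspace f θ) = ⊤

/-- The set of (distinct) eigenvalues of `f`. -/
def EigSet {V : Type} [AddCommGroup V] [Module F V] (f : Module.End F V) : Set F :=
  {θ : F | Module.End.eigenspace f θ ≠ ⊥}

/-- The representation `π` of `A` on `V` is irreducible. -/
def IsIrrep {A V : Type} [Ring A] [Algebra F A] [AddCommGroup V] [Module F V]
    (π : A →ₐ[F] Module.End F V) : Prop :=
  Nontrivial V ∧ ∀ W : Submodule F V, (∀ a : A, ∀ v ∈ W, π a v ∈ W) → W = ⊥ ∨ W = ⊤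

/-- Isomorphism of representations of `A`. -/
def RepIso {A V W : Type} [Ring A] [Algebra F A] [AddCommGroup V] [Module F V]
    [AddCommGroup W] [Module F W]
    (π : A →ₐ[F] Module.End F V) (π' : A →ₐ[F] Module.End F W) : Prop :=
  ∃ σ : V ≃ₗ[F] W, ∀ (a : A) (v : V), σ (π a v) = π' a (σ v)

section NilpotentEvaluation

variable {R A : Type*} [CommRing R] [Ring A] [Algebra R A] {a b : A} {N : ℕ}

lemma aeval_trunc_coe (ha : a ^ N = 0) (P : Polynomial R) :
    Polynomial.aeval a (PowerSeries.trunc N (P : PowerSeries R)) = Polynomial.aeval a P := by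
  have hdvd : Polynomial.X ^ N ∣ PowerSeries.trunc N (P : PowerSeries R) - P :=
    Polynomial.X_pow_dvd_iff.mpr fun d hd => by simp [PowerSeries.coeff_trunc, hd]
  obtain ⟨Q, hQ⟩ := hdvd
  rw [← sub_eq_zero, ← map_sub, hQ, map_mul, map_pow, Polynomial.aeval_X, ha, zero_mul]

/-- Evaluation of formal power series at an element `a` of an algebra, not necessarily
commutative, with `a ^ N = 0`: all terms of degree at least `N` are dropped. -/
def nilpotentAeval (ha : a ^ N = 0) : PowerSeries R →ₐ[R] A :=
  AlgHom.ofLinearMap ((Polynomial.aeval a).toLinearMap ∘ₗ PowerSeries.trunc N)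
    (by simpa using aeval_trunc_coe ha (1 : Polynomial R))
    fun g h => by
      simp only [LinearMap.comp_apply, AlgHom.toLinearMap_apply]
      rw [← PowerSeries.trunc_trunc_mul_trunc, ← Polynomial.coe_mul, aeval_trunc_coe ha, map_mul]

lemma nilpotentAeval_coe (ha : a ^ N = 0) (P : Polynomial R) :
    nilpotentAeval ha (P : PowerSeries R) = Polynomial.aeval a P :=
  aeval_trunc_coe ha P

lemma nilpotentAeval_eq_sum (ha : a ^ N = 0) (g : PowerSeries R) :
    nilpotentAeval ha g = ∑ k ∈ Finset.range N, PowerSeries.coeff k g • a ^ k := by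
  simp only [Algebra.smul_def]
  exact PowerSeries.eval₂_trunc_eq_sum_range a (algebraMap R A) N g

lemma nilpotentAeval_rescale (ha : a ^ N = 0) {p : R} (hpa : (p • a) ^ N = 0)
    (g : PowerSeries R) :
    nilpotentAeval ha (PowerSeries.rescale p g) = nilpotentAeval hpa g := by
  simp only [nilpotentAeval_eq_sum, PowerSeries.coeff_rescale, smul_pow, smul_smul, mul_comm]

lemma semiconjBy_nilpotentAeval {x : A} (h : SemiconjBy x a b) (ha : a ^ N = 0) (hb : b ^ N = 0)
    (g : PowerSeries R) : SemiconjBy x (nilpotentAeval ha g) (nilpotentAeval hb g) := by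
  simp only [SemiconjBy, nilpotentAeval_eq_sum, Finset.mul_sum, Finset.sum_mul, mul_smul_comm,
    smul_mul_assoc, (h.pow_right _).eq]

end NilpotentEvaluation

section QExponential

variable {K : Type*} [Field K] {p : K}

/-- The `q`-exponential series `∑ t ^ k / ((1 - p) (1 - p ^ 2) ⋯ (1 - p ^ k))` in the base `p`.
It is meaningful only if `p` is not a root of unity: a vanishing denominator makes the coefficient
zero. -/
def qExp (p : K) : PowerSeries K :=
  PowerSeries.mk fun k => (∏ j ∈ Finset.range k, (1 - p ^ (j + 1)))⁻¹

lemma isUnit_qExp (p : K) : IsUnit (qExp p) := by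
  simp [PowerSeries.isUnit_iff_constantCoeff, qExp]

lemma rescale_qExp (hp : ∀ k : ℕ, 0 < k → p ^ k ≠ 1) :
    PowerSeries.rescale p (qExp p) = (1 - PowerSeries.X) * qExp p := by
  ext k
  rw [sub_mul, one_mul, map_sub, PowerSeries.coeff_rescale]
  cases k with
  | zero => simp
  | succ k =>
    have hk : 1 - p ^ (k + 1) ≠ 0 := sub_ne_zero.mpr (hp _ k.succ_pos).symm
    simp only [PowerSeries.coeff_succ_X_mul, qExp, PowerSeries.coeff_mk,
      Finset.prod_range_succ, mul_inv]
    field_simp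
    ring

variable {A : Type*} [Ring A] [Algebra K A] {x y : A}

lemma exists_isUnit_mul_mul_eq_self (hp : ∀ k : ℕ, 0 < k → p ^ k ≠ 1)
    (hxy : p • (1 - x * y) = 1 - y * x) (hnil : IsNilpotent (1 - x * y)) :
    ∃ f : A, IsUnit f ∧ x * f * y = f := by
  obtain ⟨N, hN⟩ := hnil
  have hN' : (p • (1 - x * y)) ^ N = 0 := by rw [smul_pow, hN, smul_zero]
  have hsemiconj : SemiconjBy x (p • (1 - x * y)) (1 - x * y) := by
    rw [hxy, SemiconjBy]
    noncomm_ring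
  have hmul : nilpotentAeval hN (1 - PowerSeries.X : PowerSeries K) = x * y := by
    have hX := nilpotentAeval_coe hN (Polynomial.X : Polynomial K)
    rw [Polynomial.coe_X, Polynomial.aeval_X] at hX
    rw [map_sub, map_one, hX, sub_sub_cancel]
  refine ⟨nilpotentAeval hN' (qExp p), (isUnit_qExp p).map _, ?_⟩
  calc x * nilpotentAeval hN' (qExp p) * y
      = nilpotentAeval hN (qExp p) * (x * y) := by
        rw [(semiconjBy_nilpotentAeval hsemiconj hN' hN _).eq, mul_assoc]
    _ = nilpotentAeval hN ((1 - PowerSeries.X) * qExp p) := by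
        rw [mul_comm, map_mul, hmul]
    _ = nilpotentAeval hN' (qExp p) := by
        rw [← rescale_qExp hp, nilpotentAeval_rescale hN hN']

end QExponential

section Charpoly

variable {R M : Type*} [CommRing R] [AddCommGroup M] [Module R M] [Module.Finite R M]
  [Module.Free R M]

lemma charpoly_mul_comm (f g : Module.End R M) : (f * g).charpoly = (g * f).charpoly := by
  simp only [LinearMap.charpoly_def, LinearMap.toMatrix_mul, Matrix.charpoly_mul_comm]

lemma charpoly_mul_sub_one_comm (f g : Module.End R M) :
    (f * g - 1).charpoly = (g * f - 1).charpoly := by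
  have h (φ : Module.End R M) := LinearMap.charpoly_sub_smul φ 1
  simp only [one_smul] at h
  rw [h, h, charpoly_mul_comm]

lemma charpoly_smul_comp [Nontrivial R] (p : R) (f : Module.End R M) :
    (p • f).charpoly.comp (Polynomial.C p * Polynomial.X) =
      Polynomial.C (p ^ Module.finrank R M) * f.charpoly := by
  rw [LinearMap.charpoly_def, LinearMap.charpoly_def, Matrix.charpoly, Matrix.charpoly,
    ← Polynomial.coe_compRingHom_apply, RingHom.map_det, map_pow,
    Module.finrank_eq_card_chooseBasisIndex, ← Matrix.det_smul]
  congr 1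
  ext1 i j
  by_cases hij : i = j <;> simp [hij, mul_sub]

variable [IsDomain R] {p : R}

lemma isNilpotent_of_charpoly_smul_eq (hp0 : p ≠ 0) (hp : ∀ k : ℕ, 0 < k → p ^ k ≠ 1)
    {f : Module.End R M} (h : (p • f).charpoly = f.charpoly) : IsNilpotent f := by
  have hcoeff (k : ℕ) :
      f.charpoly.coeff k * p ^ k = p ^ Module.finrank R M * f.charpoly.coeff k := by
    have hk := congrArg (Polynomial.coeff · k) (charpoly_smul_comp p f)
    simpa only [h, Polynomial.comp_C_mul_X_coeff, Polynomial.coeff_C_mul] using hk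
  have hlow (k : ℕ) (hk : k < Module.finrank R M) : f.charpoly.coeff k = 0 := by
    by_contra hne
    have hpow : p ^ k = p ^ Module.finrank R M :=
      mul_left_cancel₀ hne ((hcoeff k).trans (mul_comm _ _))
    refine hp _ (Nat.sub_pos_of_lt hk) (mul_left_cancel₀ (pow_ne_zero k hp0) ?_)
    rw [← pow_add, Nat.add_sub_cancel' hk.le, mul_one, hpow]
  rw [LinearMap.isNilpotent_iff_charpoly]
  refine Polynomial.eq_of_monic_of_dvd_of_natDegree_le (Polynomial.monic_X_pow _)
    f.charpoly_monic (Polynomial.X_pow_dvd_iff.mpr hlow) ?_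
  rw [f.charpoly_natDegree, Polynomial.natDegree_X_pow]

lemma isNilpotent_one_sub_mul (hp0 : p ≠ 0) (hp : ∀ k : ℕ, 0 < k → p ^ k ≠ 1)
    {x y : Module.End R M} (hxy : p • (1 - x * y) = 1 - y * x) : IsNilpotent (1 - x * y) := by
  rw [← isNilpotent_neg_iff, neg_sub]
  refine isNilpotent_of_charpoly_smul_eq hp0 hp ?_
  rw [← neg_sub, smul_neg, hxy, neg_sub, neg_sub, charpoly_mul_sub_one_comm]

end Charpoly

section Eigenspace

variable {K V : Type*} [Field K] [AddCommGroup V] [Module K V] [FiniteDimensional K V]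
  {x y : Module.End K V} {θ : K}

lemma finrank_eigenspace_eq_of_mul_mul_eq_self {f : Module.End K V} (hf : IsUnit f)
    (hxfy : x * f * y = f) (hθ : θ ≠ 0) :
    Module.finrank K (Module.End.eigenspace x θ) =
      Module.finrank K (Module.End.eigenspace y θ⁻¹) := by
  have hbij : Function.Bijective f := (Module.End.isUnit_iff f).mp hf
  have happly (v : V) : (x * f) (y v) = f v := LinearMap.congr_fun hxfy v
  have hinj : Function.Injective (x * f) := LinearMap.injective_iff_surjective.mpr fun w => by
    obtain ⟨v, rfl⟩ := hbij.surjective w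
    exact ⟨y v, happly v⟩
  have hcomap : (Module.End.eigenspace x θ).comap f = Module.End.eigenspace y θ⁻¹ := by
    ext v
    calc v ∈ (Module.End.eigenspace x θ).comap f
        ↔ x (f v) = θ • f v := Module.End.mem_eigenspace_iff
      _ ↔ (x * f) v = (x * f) (θ • y v) := by rw [map_smul, happly, Module.End.mul_apply]
      _ ↔ v = θ • y v := hinj.eq_iff
      _ ↔ v ∈ Module.End.eigenspace y θ⁻¹ := by
        rw [Module.End.mem_eigenspace_iff, eq_inv_smul_iff₀ hθ, eq_comm]
  rw [← hcomap]
  exact ((LinearEquiv.ofBijective f hbij).ofSubmodule' _).finrank_eq.symm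

lemma finrank_eigenspace_eq {p : K} (hp0 : p ≠ 0) (hp : ∀ k : ℕ, 0 < k → p ^ k ≠ 1)
    (hxy : p • (1 - x * y) = 1 - y * x) (hθ : θ ≠ 0) :
    Module.finrank K (Module.End.eigenspace x θ) =
      Module.finrank K (Module.End.eigenspace y θ⁻¹) := by
  obtain ⟨f, hf, hxfy⟩ := exists_isUnit_mul_mul_eq_self hp hxy (isNilpotent_one_sub_mul hp0 hp hxy)
  exact finrank_eigenspace_eq_of_mul_mul_eq_self hf hxfy hθ

end Eigenspace

section Box

variable {F} {q : F}

lemma sq_smul_one_sub_bx_mul_bx (hq0 : q ≠ 0) (i : ZMod 4) :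
    q ^ 2 • (1 - bx F q i * bx F q (i + 1)) = 1 - bx F q (i + 1) * bx F q i := by
  have hrel : q • (bx F q i * bx F q (i + 1)) - q⁻¹ • (bx F q (i + 1) * bx F q i) =
      (q - q⁻¹) • (1 : BoxQ F q) := by
    simpa only [bx, map_sub, map_smul, map_mul, map_one] using
      RingQuot.mkAlgHom_rel F (BoxRel.rel1 (q := q) i)
  have hscaled := congrArg (q • ·) hrel
  simp only [smul_sub, smul_smul, mul_sub, mul_inv_cancel₀ hq0, sub_smul, one_smul, ← pow_two]
    at hscaled
  rw [smul_sub, sub_eq_sub_iff_sub_eq_sub, ← hscaled]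

theorem stmt5_general (hq0 : q ≠ 0) (hq1 : ∀ n : ℕ, 0 < n → q ^ n ≠ 1)
    {V : Type*} [AddCommGroup V] [Module F V] [FiniteDimensional F V]
    (π : BoxQ F q →ₐ[F] Module.End F V) (i : ZMod 4) {θ : F} (hθ : θ ≠ 0) :
    Module.finrank F (Module.End.eigenspace (π (bx F q i)) θ) =
      Module.finrank F (Module.End.eigenspace (π (bx F q (i + 1))) θ⁻¹) := by
  have hp (k : ℕ) (hk : 0 < k) : (q ^ 2) ^ k ≠ 1 := by
    rw [← pow_mul]
    exact hq1 _ (by positivity)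
  refine finrank_eigenspace_eq (pow_ne_zero 2 hq0) hp ?_ hθ
  simpa using congrArg π (sq_smul_one_sub_bx_mul_bx hq0 i)

end Box

/-- For a finite-dimensional irreducible `□_q`-module `V` and nonzero `θ`, the
eigenspaces `V_{x₀}(θ)`, `V_{x₁}(θ⁻¹)`, `V_{x₂}(θ)`, `V_{x₃}(θ⁻¹)` all have the
same dimension. -/
theorem stmt5 [IsAlgClosed F] [CharZero F] (q : F) (hq0 : q ≠ 0)
    (hq1 : ∀ n : ℕ, 0 < n → q ^ n ≠ 1)
    (V : Type) [AddCommGroup V] [Module F V] [FiniteDimensional F V]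
    (π : BoxQ F q →ₐ[F] Module.End F V) (hirr : IsIrrep F π)
    (θ : F) (hθ : θ ≠ 0) :
    Module.finrank F ↥(Module.End.eigenspace (π (bx F q 0)) θ) =
        Module.finrank F ↥(Module.End.eigenspace (π (bx F q 1)) θ⁻¹) ∧
    Module.finrank F ↥(Module.End.eigenspace (π (bx F q 1)) θ⁻¹) =
        Module.finrank F ↥(Module.End.eigenspace (π (bx F q 2)) θ) ∧
    Module.finrank F ↥(Module.End.eigenspace (π (bx F q 2)) θ) =
        Module.finrank F ↥(Module.End.eigenspace (π (bx F q 3)) θ⁻¹) :=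
  ⟨stmt5_general hq0 hq1 π 0 hθ, (stmt5_general hq0 hq1 π 1 (inv_ne_zero hθ)).trans
    (by rw [inv_inv, one_add_one_eq_two]), stmt5_general hq0 hq1 π 2 hθ⟩
end
end

section
/- Let V be a finite-dimensional irreducible □_q-module of type 1 and diameter d. For i ∈ ℤ/4ℤ and 0 ≤ n ≤ d let V_i(n) denote the eigenspace of the action of x_i on V with eigenvalue q^{d−2n}. Then for every i ∈ ℤ/4ℤ and every 0 ≤ n ≤ d, the sum Σ_{m=0}^{n} V_i(m) equals the sum Σ_{m=0}^{n} V_{i−1}(d−m). (In other words, for each i the flag on V induced by the eigenspace decomposition of x_i ordered by eigenvalues q^d, q^{d−2}, …, q^{−d} coincides with the flag induced by the eigenspace decomposition of x_{i−1} ordered by eigenvalues q^{−d}, q^{2−d}, …, q^{d}.) -/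
/-!
Write `A = x_{i-1}` and `B = x_i`, so that `q A B - q⁻¹ B A = q - q⁻¹`. For `θ ≠ 0` this relation
amounts to the factorization `(A - q⁻²θ)(B - θ⁻¹) = q⁻² (B - q²θ⁻¹)(A - θ)`, so `B - θ⁻¹` maps the
`θ`-eigenspace of `A` into its `q⁻²θ`-eigenspace. Along the chain of eigenspaces of `A` with
eigenvalues `q^{-d}, q^{2-d}, …, q^d` the operators `B - q^d, B - q^{d-2}, …` therefore descend
step by step, and the first one kills the bottom of the chain because `q^{-d-2}` is not an
eigenvalue of `A`. Hence every term of the chain lies in the matching partial sum of eigenspaces of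
`B`. The relation is invariant under exchanging `A` with `B` and `q` with `q⁻¹`, which gives the
reverse inclusion.
-/

noncomputable section

open FreeAlgebra

variable (F : Type) [Field F]

/-- The `□_q`-module given by `π` has type `1` and diameter `d`: each generator `x_i`
acts semisimply with set of distinct eigenvalues `{q^(d-2n) : 0 ≤ n ≤ d}`. -/
def Type1Diam (q : F) {V : Type} [AddCommGroup V] [Module F V]
    (π : BoxQ F q →ₐ[F] Module.End F V) (d : ℕ) : Prop :=
  ∀ i : ZMod 4, SemisimpleOn F (π (bx F q i)) ∧
    EigSet F (π (bx F q i)) =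
      {θ : F | ∃ n : ℕ, n ≤ d ∧ θ = q ^ ((d : ℤ) - 2 * (n : ℤ))}

section EigenspaceChain

variable {K V : Type*} [Field K] [AddCommGroup V] [Module K V]

theorem eigenspace_le_map_sub_smul_one (g : Module.End K V) {μ ν : K} (h : ν ≠ μ) :
    g.eigenspace ν ≤ (g.eigenspace ν).map (g - μ • 1) := by
  intro w hw
  have hgw : (g - μ • 1) w = (ν - μ) • w := by
    simp [Module.End.mem_eigenspace_iff.1 hw, sub_smul]
  refine ⟨(ν - μ)⁻¹ • w, Submodule.smul_mem _ _ hw, ?_⟩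
  rw [map_smul, hgw, inv_smul_smul₀ (sub_ne_zero.2 h)]

theorem comap_sub_smul_one_le_sup_eigenspace {g : Module.End K V} {μ : K} {U : Submodule K V}
    (hU : U ≤ U.map (g - μ • 1)) : U.comap (g - μ • 1) ≤ U ⊔ g.eigenspace μ :=
  calc
    U.comap (g - μ • 1) ≤ (U.map (g - μ • 1)).comap (g - μ • 1) := Submodule.comap_mono hU
    _ = U ⊔ g.eigenspace μ := by rw [Submodule.comap_map_eq, Module.End.eigenspace_def]

theorem le_iSup_eigenspace_of_le_comap (g : Module.End K V) (b : ℕ → K) (W : ℕ → Submodule K V)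
    (h_zero : W 0 ≤ g.eigenspace (b 0))
    (h_succ : ∀ m, W (m + 1) ≤ (W m).comap (g - b (m + 1) • 1)) {n : ℕ}
    (hb : Set.InjOn b (Set.Iic n)) :
    W n ≤ ⨆ m ≤ n, g.eigenspace (b m) := by
  induction n with
  | zero => exact h_zero.trans (le_iSup₂_of_le 0 le_rfl le_rfl)
  | succ n ih =>
    have h_onto : ⨆ m ≤ n, g.eigenspace (b m) ≤
        (⨆ m ≤ n, g.eigenspace (b m)).map (g - b (n + 1) • 1) := by
      simp only [Submodule.map_iSup]
      refine iSup₂_mono fun m hm ↦ eigenspace_le_map_sub_smul_one g fun h ↦ ?_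
      have : m = n + 1 := hb (hm.trans n.le_succ) Set.self_mem_Iic h
      omega
    rw [Nat.iSup_le_succ]
    calc
      W (n + 1) ≤ (W n).comap (g - b (n + 1) • 1) := h_succ n
      _ ≤ (⨆ m ≤ n, g.eigenspace (b m)).comap (g - b (n + 1) • 1) :=
        Submodule.comap_mono (ih (hb.mono (Set.Iic_subset_Iic.2 n.le_succ)))
      _ ≤ (⨆ m ≤ n, g.eigenspace (b m)) ⊔ g.eigenspace (b (n + 1)) :=
        comap_sub_smul_one_le_sup_eigenspace h_onto

end EigenspaceChain

/-- The `q`-Weyl relation `(q A B - q⁻¹ B A) / (q - q⁻¹) = 1` between two elements of an algebra,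
which consecutive generators of `□_q` satisfy; the denominator is cleared. -/
def IsQWeylPair {K R : Type*} [Field K] [Ring R] [Algebra K R] (q : K) (A B : R) : Prop :=
  q • (A * B) - q⁻¹ • (B * A) = (q - q⁻¹) • (1 : R)

namespace IsQWeylPair

section Algebra

variable {K R S : Type*} [Field K] [Ring R] [Algebra K R] [Ring S] [Algebra K S] {q : K} {A B : R}

theorem symm (h : IsQWeylPair q A B) : IsQWeylPair q⁻¹ B A := by
  unfold IsQWeylPair at h ⊢
  rw [inv_inv, ← neg_sub, h, ← neg_smul, neg_sub]

theorem map (h : IsQWeylPair q A B) (φ : R →ₐ[K] S) : IsQWeylPair q (φ A) (φ B) := by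
  unfold IsQWeylPair at h ⊢
  simpa only [map_sub, map_smul, map_mul, map_one] using congrArg φ h

theorem sub_mul_sub (h : IsQWeylPair q A B) (hq : q ≠ 0) {θ : K} (hθ : θ ≠ 0) :
    (A - ((q ^ 2)⁻¹ * θ) • 1) * (B - θ⁻¹ • 1) =
      (q ^ 2)⁻¹ • ((B - (q ^ 2 * θ⁻¹) • 1) * (A - θ • 1)) := by
  have hAB : A * B = (q ^ 2)⁻¹ • (B * A) + (1 - (q ^ 2)⁻¹) • 1 := by
    have hqAB : q • (A * B) = q⁻¹ • (B * A) + (q - q⁻¹) • 1 := sub_eq_iff_eq_add'.1 h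
    rw [← inv_smul_smul₀ hq (A * B), hqAB]
    match_scalars <;> field_simp
  simp only [sub_mul, mul_sub, smul_mul_assoc, mul_smul_comm, one_mul, mul_one, hAB]
  match_scalars <;> field_simp
  ring

end Algebra

section Endomorphism

variable {K V : Type*} [Field K] [AddCommGroup V] [Module K V] {q : K} {A B : Module.End K V}

theorem eigenspace_le_comap_eigenspace (h : IsQWeylPair q A B) (hq : q ≠ 0) {θ : K} (hθ : θ ≠ 0) :
    A.eigenspace θ ≤ (A.eigenspace ((q ^ 2)⁻¹ * θ)).comap (B - θ⁻¹ • 1) := by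
  rw [Module.End.eigenspace_def, Module.End.eigenspace_def, ← LinearMap.ker_comp,
    ← Module.End.mul_eq_comp, h.sub_mul_sub hq hθ]
  intro v hv
  simp [LinearMap.mem_ker.1 hv]

theorem eigenspace_le_iSup_eigenspace (h : IsQWeylPair q A B) (hq : q ≠ 0) {θ : K} (hθ : θ ≠ 0)
    (hA : ¬A.HasEigenvalue ((q ^ 2)⁻¹ * θ)) {n : ℕ}
    (h_inj : Set.InjOn (fun m : ℕ ↦ (q ^ 2) ^ m) (Set.Iic n)) :
    A.eigenspace (θ * (q ^ 2) ^ n) ≤ ⨆ m ≤ n, B.eigenspace (θ * (q ^ 2) ^ m)⁻¹ := by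
  refine le_iSup_eigenspace_of_le_comap B (fun m ↦ (θ * (q ^ 2) ^ m)⁻¹)
    (fun m ↦ A.eigenspace (θ * (q ^ 2) ^ m)) ?_ (fun m ↦ ?_) ?_
  · have h_bot : A.eigenspace ((q ^ 2)⁻¹ * θ) = ⊥ := not_not.1 hA
    simpa [h_bot, Module.End.eigenspace_def] using h.eigenspace_le_comap_eigenspace hq hθ
  · have h_lower : (q ^ 2)⁻¹ * (θ * (q ^ 2) ^ (m + 1)) = θ * (q ^ 2) ^ m := by
      rw [pow_succ' (q ^ 2), mul_left_comm θ, inv_mul_cancel_left₀ (pow_ne_zero 2 hq)]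
    simpa only [h_lower] using
      h.eigenspace_le_comap_eigenspace hq (mul_ne_zero hθ (pow_ne_zero (m + 1) (pow_ne_zero 2 hq)))
  · exact fun m hm m' hm' h_eq ↦ h_inj hm hm' (mul_left_cancel₀ hθ (inv_injective h_eq))

theorem iSup_eigenspace_inv_eq (h : IsQWeylPair q A B) (hq : q ≠ 0) {θ : K} (hθ : θ ≠ 0)
    (hA : ¬A.HasEigenvalue ((q ^ 2)⁻¹ * θ)) (hB : ¬B.HasEigenvalue (q ^ 2 * θ⁻¹)) {n : ℕ}
    (h_inj : Set.InjOn (fun m : ℕ ↦ (q ^ 2) ^ m) (Set.Iic n)) :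
    ⨆ m ≤ n, B.eigenspace (θ * (q ^ 2) ^ m)⁻¹ = ⨆ m ≤ n, A.eigenspace (θ * (q ^ 2) ^ m) := by
  refine le_antisymm (iSup₂_le fun k hk ↦ ?_) (iSup₂_le fun k hk ↦ ?_)
  · have h_inj' : Set.InjOn (fun m : ℕ ↦ (q⁻¹ ^ 2) ^ m) (Set.Iic k) := fun m hm m' hm' h_eq ↦
      h_inj (hm.trans hk) (hm'.trans hk) (by simpa only [inv_pow, inv_inj] using h_eq)
    have h_le := h.symm.eigenspace_le_iSup_eigenspace (inv_ne_zero hq) (inv_ne_zero hθ)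
      (by simpa only [inv_pow, inv_inv] using hB) h_inj'
    simp only [inv_pow, ← mul_inv, inv_inv] at h_le
    exact h_le.trans (biSup_mono fun _ hm ↦ hm.trans hk)
  · exact (h.eigenspace_le_iSup_eigenspace hq hθ hA
      (h_inj.mono (Set.Iic_subset_Iic.2 hk))).trans (biSup_mono fun _ hm ↦ hm.trans hk)

end Endomorphism

end IsQWeylPair

theorem zpow_injective_of_pow_ne_one {G₀ : Type*} [GroupWithZero G₀] {q : G₀} (hq0 : q ≠ 0)
    (hq1 : ∀ n : ℕ, 0 < n → q ^ n ≠ 1) : Function.Injective fun k : ℤ ↦ q ^ k := by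
  have h_inj : Function.Injective fun k : ℤ ↦ Units.mk0 q hq0 ^ k := by
    rw [injective_zpow_iff_not_isOfFinOrder, isOfFinOrder_iff_pow_eq_one]
    rintro ⟨n, hn, h⟩
    exact hq1 n hn (by simpa using congrArg Units.val h)
  intro k l h
  exact h_inj (Units.ext (by simpa using h))

theorem sq_pow_injective_of_pow_ne_one {G₀ : Type*} [GroupWithZero G₀] {q : G₀} (hq0 : q ≠ 0)
    (hq1 : ∀ n : ℕ, 0 < n → q ^ n ≠ 1) : Function.Injective fun m : ℕ ↦ (q ^ 2) ^ m := by
  intro m m' h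
  have : ((2 * m : ℕ) : ℤ) = (2 * m' : ℕ) :=
    zpow_injective_of_pow_ne_one hq0 hq1 (by simpa only [zpow_natCast, pow_mul] using h)
  omega

section BoxQ

variable {F}

theorem isQWeylPair_bx (q : F) (i : ZMod 4) : IsQWeylPair q (bx F q i) (bx F q (i + 1)) := by
  simpa only [IsQWeylPair, bx, map_sub, map_smul, map_mul, map_one] using
    RingQuot.mkAlgHom_rel F (BoxRel.rel1 (q := q) i)

theorem Type1Diam.not_hasEigenvalue {q : F} (hq0 : q ≠ 0) (hq1 : ∀ n : ℕ, 0 < n → q ^ n ≠ 1)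
    {V : Type} [AddCommGroup V] [Module F V] {π : BoxQ F q →ₐ[F] Module.End F V} {d : ℕ}
    (hT : Type1Diam F q π d) (i : ZMod 4) {k : ℤ} (hk : d < |k|) :
    ¬(π (bx F q i)).HasEigenvalue (q ^ k) := by
  intro h
  have hmem : q ^ k ∈ EigSet F (π (bx F q i)) := h
  rw [(hT i).2] at hmem
  obtain ⟨m, hm, h_eq⟩ := hmem
  have hkm : k = d - 2 * m := zpow_injective_of_pow_ne_one hq0 hq1 h_eq
  rw [lt_abs] at hk
  omega

theorem stmt7_general {q : F} (hq : q ≠ 0) {V : Type*} [AddCommGroup V] [Module F V]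
    (π : BoxQ F q →ₐ[F] Module.End F V) (d : ℕ) (i : ZMod 4)
    (h_top : ¬(π (bx F q i)).HasEigenvalue (q ^ ((d : ℤ) + 2)))
    (h_bot : ¬(π (bx F q (i - 1))).HasEigenvalue (q ^ (-(d : ℤ) - 2)))
    {n : ℕ} (hn : n ≤ d) (h_inj : Set.InjOn (fun m : ℕ ↦ (q ^ 2) ^ m) (Set.Iic n)) :
    ⨆ m ≤ n, (π (bx F q i)).eigenspace (q ^ ((d : ℤ) - 2 * (m : ℤ))) =
      ⨆ m ≤ n, (π (bx F q (i - 1))).eigenspace (q ^ ((d : ℤ) - 2 * ((d - m : ℕ) : ℤ))) := by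
  have h_weyl : IsQWeylPair q (π (bx F q (i - 1))) (π (bx F q i)) := by
    simpa only [sub_add_cancel] using (isQWeylPair_bx q (i - 1)).map π
  have h_pow (m : ℕ) : q ^ (-(d : ℤ)) * (q ^ 2) ^ m = q ^ (2 * (m : ℤ) - d) := by
    rw [zpow_sub₀ hq, zpow_mul, zpow_ofNat, zpow_natCast, zpow_neg, div_eq_inv_mul]
  have h_bot' : (q ^ 2)⁻¹ * q ^ (-(d : ℤ)) = q ^ (-(d : ℤ) - 2) := by
    rw [zpow_sub₀ hq, zpow_ofNat, div_eq_inv_mul]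
  have h_top' : q ^ 2 * (q ^ (-(d : ℤ)))⁻¹ = q ^ ((d : ℤ) + 2) := by
    rw [zpow_neg, inv_inv, zpow_add₀ hq, zpow_ofNat, mul_comm]
  have h_flag := h_weyl.iSup_eigenspace_inv_eq hq (zpow_ne_zero (-(d : ℤ)) hq)
    (h_bot' ▸ h_bot) (h_top' ▸ h_top) h_inj
  simp only [h_pow, ← zpow_neg, neg_sub] at h_flag
  rw [h_flag]
  refine iSup_congr fun m ↦ iSup_congr fun hm ↦ ?_
  rw [show (d : ℤ) - 2 * ((d - m : ℕ) : ℤ) = 2 * (m : ℤ) - d by omega]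

end BoxQ

/-- For a type-1 irreducible `□_q`-module of diameter `d`, the flag induced by the
eigenspace decomposition of `x_i` (ordered `q^d, …, q^{-d}`) coincides with the flag
induced by the inverted eigenspace decomposition of `x_{i-1}`. -/
theorem stmt7 [IsAlgClosed F] [CharZero F] (q : F) (hq0 : q ≠ 0)
    (hq1 : ∀ n : ℕ, 0 < n → q ^ n ≠ 1)
    (V : Type) [AddCommGroup V] [Module F V] [FiniteDimensional F V]
    (π : BoxQ F q →ₐ[F] Module.End F V) (hirr : IsIrrep F π)
    (d : ℕ) (hT : Type1Diam F q π d) :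
    ∀ i : ZMod 4, ∀ n : ℕ, n ≤ d →
      (⨆ m : ℕ, ⨆ _ : m ≤ n,
          Module.End.eigenspace (π (bx F q i)) (q ^ ((d : ℤ) - 2 * (m : ℤ)))) =
      (⨆ m : ℕ, ⨆ _ : m ≤ n,
          Module.End.eigenspace (π (bx F q (i - 1)))
            (q ^ ((d : ℤ) - 2 * ((d - m : ℕ) : ℤ)))) := by
  intro i n hn
  exact stmt7_general hq0 π d i (hT.not_hasEigenvalue hq0 hq1 i (lt_abs.2 (by omega)))
    (hT.not_hasEigenvalue hq0 hq1 (i - 1) (lt_abs.2 (by omega))) hn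
    (sq_pow_injective_of_pow_ne_one hq0 hq1).injOn
end
end

section
/- Let V be a finite-dimensional irreducible □_q-module of type 1. Let W be a nonzero F-subspace of V such that x_0·W ⊆ W and x_2·W ⊆ W. Then W = V. -/
/-!
Let `A, B, C, D` be the actions of `x₀, x₁, x₂, x₃`.  The relation `q X Y - q⁻¹ Y X = q - q⁻¹` says
that `Y - θ⁻¹` maps the `θ`-eigenspace of `X` to the `q⁻²θ`-eigenspace.  Iterating, a
`θ`-eigenvector of `X` is a sum of eigenvectors of `Y` with eigenvalues `θ⁻¹, q²θ⁻¹, q⁴θ⁻¹, …`.  The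
relation is symmetric under `(X, Y, q) ↦ (Y, X, q⁻¹)`, so likewise a `θ`-eigenvector of `Y` is a sum
of eigenvectors of `X` with eigenvalues `θ⁻¹, q⁻²θ⁻¹, q⁻⁴θ⁻¹, …`.

Shrink `W` to a minimal nonzero subspace `M` invariant under `A` and `C`.  If `c q^(2r)` is the top
eigenvalue of `A` on `M`, then `M` lies in the sum of the eigenspaces of `B` for `(c q^(2m))⁻¹`,
`m ≤ r`, whereas an eigenvector of `C` for `c q^(2s)` lies in the sum of those with `m ≥ s`.  Hence
the top eigenvalue of `C` on `M` is at most that of `A`, and by the symmetric argument through `D`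
the two agree; an eigenvector of `C` in `M` for this common value is then an eigenvector of `B`.

By the shifting property the span of the eigenvectors of `B` in `M` is invariant under `A` and `C`,
so by minimality it is `M`, and `M` is `B`-invariant.  The same argument applies to `D`, and
irreducibility gives `M = V`.
-/

noncomputable section

open FreeAlgebra

variable (F : Type) [Field F]

open Module.End

lemma biSup_inf_biSup_of_iSupIndep {α ι : Type*} [CompleteLattice α] [IsModularLattice α]
    [IsCompactlyGenerated α] {t : ι → α} (ht : iSupIndep t) (S T : Set ι) :
    (⨆ i ∈ S, t i) ⊓ ⨆ i ∈ T, t i = ⨆ i ∈ S ∩ T, t i := by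
  have hle : ⨆ i ∈ S ∩ T, t i ≤ ⨆ i ∈ T, t i := biSup_mono fun _ hi => hi.2
  have hdisj : Disjoint (⨆ i ∈ S \ T, t i) (⨆ i ∈ T, t i) :=
    ht.disjoint_biSup_biSup Set.disjoint_sdiff_left
  rw [← Set.inter_union_sdiff S T, iSup_union, sup_inf_assoc_of_le _ hle, hdisj.eq_bot, sup_bot_eq,
    Set.inter_union_sdiff]

lemma not_isOfFinOrder_of_forall_pow_ne_one {G : Type*} [Monoid G] {u : Gˣ}
    (hu : ∀ n : ℕ, 0 < n → (u : G) ^ n ≠ 1) : ¬IsOfFinOrder u := by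
  rw [← Units.isOfFinOrder_val, isOfFinOrder_iff_pow_eq_one]
  exact fun ⟨n, hn, hun⟩ => hu n hn hun

section Eigenspace

variable {K V ι : Type*} [Field K] [AddCommGroup V] [Module K V] {f : Module.End K V}
  {W : Submodule K V}

lemma eigenspace_eq_bot_of_notMem_range {ν : ι → K} (hν : ⨆ i, f.eigenspace (ν i) = ⊤) {μ : K}
    (hμ : μ ∉ Set.range ν) : f.eigenspace μ = ⊥ := by
  have hle : ⨆ i, f.eigenspace (ν i) ≤ ⨆ θ ≠ μ, f.eigenspace θ :=
    iSup_le fun i => le_iSup₂_of_le (ν i) (fun h => hμ ⟨i, h⟩) le_rfl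
  simpa only [hν, top_le_iff, disjoint_top] using (f.eigenspaces_iSupIndep μ).mono_right hle

lemma eq_iSup_inf_eigenspace [FiniteDimensional K V] {ν : ι → K}
    (hν : ⨆ i, f.eigenspace (ν i) = ⊤) (hW : W ∈ f.invtSubmodule) :
    W = ⨆ i, W ⊓ f.eigenspace (ν i) := by
  have htop : ⨆ μ, f.eigenspace μ = ⊤ :=
    top_unique (hν.ge.trans (iSup_le fun i => le_iSup f.eigenspace (ν i)))
  refine le_antisymm ?_ (iSup_le fun _ => inf_le_left)
  refine (Submodule.eq_iSup_inf_genEigenspace 1 hW htop).trans_le (iSup_le fun μ => ?_)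
  by_cases hμ : μ ∈ Set.range ν
  · obtain ⟨i, rfl⟩ := hμ
    exact le_iSup (fun i => W ⊓ f.eigenspace (ν i)) i
  · exact inf_le_right.trans ((eigenspace_eq_bot_of_notMem_range hν hμ).trans_le bot_le)

lemma mem_invtSubmodule_of_le_iSup_inf_eigenspace {ν : ι → K}
    (hW : W ≤ ⨆ i, W ⊓ f.eigenspace (ν i)) : W ∈ f.invtSubmodule := by
  refine hW.trans (iSup_le fun i v hv => ?_)
  rw [Submodule.mem_comap, mem_eigenspace_iff.mp hv.2]
  exact W.smul_mem _ hv.1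

lemma mem_eigenspace_sup_iSup_of_sub_smul_mem {μ : K} {ν : ι → K}
    (hν : ∀ i, ν i ≠ μ) {v : V} (hv : f v - μ • v ∈ ⨆ i, f.eigenspace (ν i)) :
    v ∈ f.eigenspace μ ⊔ ⨆ i, f.eigenspace (ν i) := by
  have hle : ⨆ i, f.eigenspace (ν i) ≤ (⨆ i, f.eigenspace (ν i)).map (f - μ • 1) := by
    refine iSup_le fun i u hu => ⟨(ν i - μ)⁻¹ • u, ?_, ?_⟩
    · exact Submodule.smul_mem _ _ (Submodule.mem_iSup_of_mem i hu)
    · rw [map_smul, LinearMap.sub_apply, mem_eigenspace_iff.mp hu, LinearMap.smul_apply, one_apply,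
        ← sub_smul, inv_smul_smul₀ (sub_ne_zero.mpr (hν i))]
  obtain ⟨u, hu, huv⟩ := hle hv
  have hker : v - u ∈ f.eigenspace μ := by
    simp only [LinearMap.sub_apply, LinearMap.smul_apply, one_apply] at huv
    rw [mem_eigenspace_iff, map_sub, smul_sub, sub_eq_sub_iff_sub_eq_sub, huv]
  simpa only [sub_add_cancel] using Submodule.add_mem_sup hker hu

end Eigenspace

section QWeyl

variable {K V : Type*} [Field K] [AddCommGroup V] [Module K V] {q c : Kˣ}

/-- `X` and `Y` satisfy the `q`-Weyl relation, the first defining relation of `□_q`.  The parameter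
is a unit so that the symmetry `(X, Y, q) ↦ (Y, X, q⁻¹)` can be expressed. -/
def IsQWeyl (q : Kˣ) (X Y : Module.End K V) : Prop :=
  (q : K) • (X * Y) - (q : K)⁻¹ • (Y * X) = ((q : K) - (q : K)⁻¹) • 1

/-- The eigenspace of `f` for the `n`-th term of the geometric sequence `c q ^ (2 n)`, `n ∈ ℤ`.  The
eigenvalues of the generators of `□_q` on a module of type `1` form segments of such sequences. -/
def qWeightSpace (q c : Kˣ) (f : Module.End K V) (n : ℤ) : Submodule K V :=
  f.eigenspace ((c * q ^ (2 * n) : Kˣ) : K)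

/-- The indices of the weights of `f` that occur in `W`. -/
def qWeightSupport (q c : Kˣ) (f : Module.End K V) (W : Submodule K V) : Set ℤ :=
  {n | W ⊓ qWeightSpace q c f n ≠ ⊥}

lemma mul_zpow_two_mul_injective (hq : ¬IsOfFinOrder q) :
    Function.Injective fun n : ℤ => ((c * q ^ (2 * n) : Kˣ) : K) := by
  intro m n h
  have h2 : 2 * m = 2 * n :=
    injective_zpow_iff_not_isOfFinOrder.mpr hq (mul_left_cancel (Units.ext h))
  lia

lemma iSupIndep_qWeightSpace (hq : ¬IsOfFinOrder q) (f : Module.End K V) :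
    iSupIndep (qWeightSpace q c f) :=
  f.eigenspaces_iSupIndep.comp (mul_zpow_two_mul_injective hq)

lemma qWeightSpace_inv_neg (f : Module.End K V) (n : ℤ) :
    qWeightSpace q⁻¹ c f (-n) = qWeightSpace q c f n := by
  simp only [qWeightSpace, inv_zpow', mul_neg, neg_neg]

namespace IsQWeyl

variable {X Y Z : Module.End K V}

lemma symm (h : IsQWeyl q X Y) : IsQWeyl q⁻¹ Y X := by
  unfold IsQWeyl at h ⊢
  rw [Units.val_inv_eq_inv_val, inv_inv, ← neg_sub, h, ← neg_smul, neg_sub]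

lemma sub_inv_smul_mem_eigenspace (h : IsQWeyl q X Y) {θ : Kˣ} {v : V}
    (hv : v ∈ X.eigenspace (θ : K)) :
    Y v - (θ : K)⁻¹ • v ∈ X.eigenspace ((q⁻¹ ^ 2 * θ : Kˣ) : K) := by
  rw [mem_eigenspace_iff] at hv ⊢
  have hXY : X (Y v) - ((q : K)⁻¹ * ((q : K)⁻¹ * θ)) • Y v =
      ((q : K)⁻¹ * ((q : K) - (q : K)⁻¹)) • v := by
    have := congrArg (fun f : Module.End K V => (q : K)⁻¹ • f v) h
    simpa only [LinearMap.sub_apply, LinearMap.smul_apply, mul_apply, hv, map_smul, one_apply,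
      smul_sub, smul_smul, inv_mul_cancel₀ q.ne_zero, one_smul] using this
  rw [map_sub, map_smul, hv, sub_eq_iff_eq_add.mp hXY]
  push_cast
  match_scalars <;> field_simp
  ring

lemma sub_inv_smul_mem_qWeightSpace (h : IsQWeyl q X Y) {n : ℤ} {v : V}
    (hv : v ∈ qWeightSpace q c X n) :
    Y v - ((c⁻¹ * q⁻¹ ^ (2 * n) : Kˣ) : K) • v ∈ qWeightSpace q c X (n - 1) := by
  have hwt : q⁻¹ ^ 2 * (c * q ^ (2 * n)) = c * q ^ (2 * (n - 1)) := by
    rw [mul_left_comm, mul_sub_one, sub_eq_neg_add, zpow_add, zpow_neg, zpow_ofNat, inv_pow]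
  have hinv : ((c⁻¹ * q⁻¹ ^ (2 * n) : Kˣ) : K) = ((c * q ^ (2 * n) : Kˣ) : K)⁻¹ := by
    rw [inv_zpow, ← mul_inv, Units.val_inv_eq_inv_val]
  rw [hinv, qWeightSpace, ← hwt]
  exact h.sub_inv_smul_mem_eigenspace hv

lemma iSup_inf_eigenspace_mem_invtSubmodule (h : IsQWeyl q X Y) {M : Submodule K V}
    (hM : M ∈ Y.invtSubmodule) :
    ⨆ θ : Kˣ, M ⊓ X.eigenspace (θ : K) ∈ Y.invtSubmodule := by
  rw [mem_invtSubmodule]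
  refine iSup_le fun θ v hv => ?_
  have hshift := Submodule.mem_iSup_of_mem (p := fun θ : Kˣ => M ⊓ X.eigenspace (θ : K)) _
    ⟨M.sub_mem (hM hv.1) (M.smul_mem _ hv.1), h.sub_inv_smul_mem_eigenspace hv.2⟩
  simpa only [Submodule.mem_comap, sub_add_cancel] using
    Submodule.add_mem _ hshift (Submodule.smul_mem _ (θ : K)⁻¹ (Submodule.mem_iSup_of_mem θ hv))

lemma qWeightSpace_le_iSup_of_sub_eq_bot (h : IsQWeyl q X Y) (hq : ¬IsOfFinOrder q) (k : ℕ) {n : ℤ}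
    (hk : qWeightSpace q c X (n - k) = ⊥) :
    qWeightSpace q c X n ≤ ⨆ m ∈ Set.Iic n, qWeightSpace q⁻¹ c⁻¹ Y m := by
  induction k generalizing n with
  | zero => simp_all
  | succ k ih =>
    intro v hv
    have hshift := ih (n := n - 1) (by rwa [sub_sub, add_comm, ← Nat.cast_succ])
      (h.sub_inv_smul_mem_qWeightSpace hv)
    rw [iSup_subtype'] at hshift
    have hne (m : Set.Iic (n - 1)) :
        ((c⁻¹ * q⁻¹ ^ (2 * (m : ℤ)) : Kˣ) : K) ≠ ((c⁻¹ * q⁻¹ ^ (2 * n) : Kˣ) : K) :=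
      (mul_zpow_two_mul_injective (isOfFinOrder_inv_iff.not.mpr hq)).ne
        (m.2.trans_lt (sub_one_lt n)).ne
    have hle : qWeightSpace q⁻¹ c⁻¹ Y n ⊔ ⨆ m : Set.Iic (n - 1), qWeightSpace q⁻¹ c⁻¹ Y m ≤
        ⨆ m ∈ Set.Iic n, qWeightSpace q⁻¹ c⁻¹ Y m :=
      sup_le (le_biSup (qWeightSpace q⁻¹ c⁻¹ Y) Set.self_mem_Iic)
        (iSup_le fun m => le_biSup (qWeightSpace q⁻¹ c⁻¹ Y) (m.2.trans (sub_one_lt n).le))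
    exact hle (mem_eigenspace_sup_iSup_of_sub_smul_mem hne hshift)

variable [FiniteDimensional K V]

lemma qWeightSpace_le_iSup_Iic (h : IsQWeyl q X Y) (hq : ¬IsOfFinOrder q) (n : ℤ) :
    qWeightSpace q c X n ≤ ⨆ m ∈ Set.Iic n, qWeightSpace q⁻¹ c⁻¹ Y m := by
  have hfin : {k : ℕ | qWeightSpace q c X (n - k) ≠ ⊥}.Finite :=
    (Submodule.finite_ne_bot_of_iSupIndep (iSupIndep_qWeightSpace hq X)).preimage
      fun _ _ _ _ hkl => Nat.cast_injective (sub_right_injective hkl)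
  obtain ⟨k, hk⟩ := hfin.exists_notMem
  exact h.qWeightSpace_le_iSup_of_sub_eq_bot hq k (not_not.mp hk)

lemma qWeightSpace_le_iSup_Ici (h : IsQWeyl q Y Z) (hq : ¬IsOfFinOrder q) (n : ℤ) :
    qWeightSpace q c Z n ≤ ⨆ m ∈ Set.Ici n, qWeightSpace q⁻¹ c⁻¹ Y m := by
  rw [← qWeightSpace_inv_neg]
  refine (h.symm.qWeightSpace_le_iSup_Iic (isOfFinOrder_inv_iff.not.mpr hq) (-n)).trans
    (iSup₂_le fun m hm => ?_)
  rw [← qWeightSpace_inv_neg]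
  exact le_biSup (qWeightSpace q⁻¹ c⁻¹ Y) (Set.mem_Ici.mpr (le_neg_of_le_neg hm))

end IsQWeyl

section Support

variable [FiniteDimensional K V] {f : Module.End K V} {W : Submodule K V}

lemma le_iSup_qWeightSpace_of_mem_upperBounds (hf : ⨆ n, qWeightSpace q c f n = ⊤)
    (hW : W ∈ f.invtSubmodule) {r : ℤ} (hr : r ∈ upperBounds (qWeightSupport q c f W)) :
    W ≤ ⨆ m ∈ Set.Iic r, qWeightSpace q c f m := by
  rw [eq_iSup_inf_eigenspace hf hW]
  refine iSup_le fun n => ?_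
  by_cases hn : n ∈ qWeightSupport q c f W
  · exact inf_le_right.trans (le_biSup (qWeightSpace q c f) (hr hn))
  · exact (not_not.mp hn).trans_le bot_le

lemma exists_isGreatest_qWeightSupport (hq : ¬IsOfFinOrder q) (hf : ⨆ n, qWeightSpace q c f n = ⊤)
    (hW : W ∈ f.invtSubmodule) (hW0 : W ≠ ⊥) : ∃ r, IsGreatest (qWeightSupport q c f W) r := by
  have hfin : (qWeightSupport q c f W).Finite :=
    (Submodule.finite_ne_bot_of_iSupIndep (iSupIndep_qWeightSpace hq f)).subset
      fun n hn => ne_bot_of_le_ne_bot hn inf_le_right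
  have hne : (qWeightSupport q c f W).Nonempty := by
    by_contra hempty
    refine hW0 ((eq_iSup_inf_eigenspace hf hW).trans (iSup_eq_bot.mpr fun n => ?_))
    exact not_not.mp fun hn => hempty ⟨n, hn⟩
  exact hfin.bddAbove.exists_isGreatest_of_nonempty hne

end Support

section Square

variable [FiniteDimensional K V] {A B C D : Module.End K V} {M : Submodule K V}

lemma inf_qWeightSpace_le_iSup_Icc (hq : ¬IsOfFinOrder q) (hAB : IsQWeyl q A B)
    (hBC : IsQWeyl q B C) (hA : ⨆ n, qWeightSpace q c A n = ⊤) (hMA : M ∈ A.invtSubmodule) {r : ℤ}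
    (hr : r ∈ upperBounds (qWeightSupport q c A M)) (s : ℤ) :
    M ⊓ qWeightSpace q c C s ≤ ⨆ m ∈ Set.Icc s r, qWeightSpace q⁻¹ c⁻¹ B m := by
  have hMB : M ≤ ⨆ m ∈ Set.Iic r, qWeightSpace q⁻¹ c⁻¹ B m :=
    (le_iSup_qWeightSpace_of_mem_upperBounds hA hMA hr).trans <| iSup₂_le fun n hn =>
      (hAB.qWeightSpace_le_iSup_Iic hq n).trans (biSup_mono (Set.Iic_subset_Iic.mpr hn))
  rw [← Set.Ici_inter_Iic, Set.inter_comm,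
    ← biSup_inf_biSup_of_iSupIndep (iSupIndep_qWeightSpace (isOfFinOrder_inv_iff.not.mpr hq) B)]
  exact inf_le_inf hMB (hBC.qWeightSpace_le_iSup_Ici hq s)

lemma mem_upperBounds_qWeightSupport (hq : ¬IsOfFinOrder q) (hAB : IsQWeyl q A B)
    (hBC : IsQWeyl q B C) (hA : ⨆ n, qWeightSpace q c A n = ⊤) (hMA : M ∈ A.invtSubmodule) {r : ℤ}
    (hr : r ∈ upperBounds (qWeightSupport q c A M)) :
    r ∈ upperBounds (qWeightSupport q c C M) := by
  intro s hs
  by_contra! hrs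
  have hle := inf_qWeightSpace_le_iSup_Icc hq hAB hBC hA hMA hr s
  rw [Set.Icc_eq_empty hrs.not_ge, iSup_emptyset] at hle
  exact hs (le_bot_iff.mp hle)

lemma qWeightSupport_inv_nonempty (hq : ¬IsOfFinOrder q) (hAB : IsQWeyl q A B)
    (hBC : IsQWeyl q B C) (hCD : IsQWeyl q C D) (hDA : IsQWeyl q D A)
    (hA : ⨆ n, qWeightSpace q c A n = ⊤) (hC : ⨆ n, qWeightSpace q c C n = ⊤)
    (hMA : M ∈ A.invtSubmodule) (hMC : M ∈ C.invtSubmodule) (hM : M ≠ ⊥) :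
    (qWeightSupport q⁻¹ c⁻¹ B M).Nonempty := by
  obtain ⟨r, hr⟩ := exists_isGreatest_qWeightSupport hq hA hMA hM
  obtain ⟨s, hs⟩ := exists_isGreatest_qWeightSupport hq hC hMC hM
  have hsr : s ≤ r := mem_upperBounds_qWeightSupport hq hAB hBC hA hMA hr.2 hs.1
  have hrs : r ≤ s := mem_upperBounds_qWeightSupport hq hCD hDA hC hMC hs.2 hr.1
  obtain rfl := le_antisymm hrs hsr
  have hle := inf_qWeightSpace_le_iSup_Icc hq hAB hBC hA hMA hr.2 r
  rw [Set.Icc_self, iSup_singleton] at hle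
  exact ⟨r, ne_bot_of_le_ne_bot hs.1 (le_inf inf_le_left hle)⟩

lemma mem_invtSubmodule_of_minimal (hq : ¬IsOfFinOrder q) (hAB : IsQWeyl q A B)
    (hBC : IsQWeyl q B C) (hCD : IsQWeyl q C D) (hDA : IsQWeyl q D A)
    (hA : ⨆ n, qWeightSpace q c A n = ⊤) (hC : ⨆ n, qWeightSpace q c C n = ⊤)
    (hM : Minimal (fun N => N ≠ ⊥ ∧ N ∈ A.invtSubmodule ⊓ C.invtSubmodule) M) :
    M ∈ B.invtSubmodule := by
  obtain ⟨hM0, hMA, hMC⟩ := hM.prop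
  obtain ⟨n, hn⟩ := qWeightSupport_inv_nonempty hq hAB hBC hCD hDA hA hC hMA hMC hM0
  have hS0 : ⨆ θ : Kˣ, M ⊓ B.eigenspace (θ : K) ≠ ⊥ :=
    ne_bot_of_le_ne_bot hn (le_iSup (fun θ : Kˣ => M ⊓ B.eigenspace (θ : K)) _)
  exact mem_invtSubmodule_of_le_iSup_inf_eigenspace <| hM.le_of_le
    ⟨hS0, hAB.symm.iSup_inf_eigenspace_mem_invtSubmodule hMA,
      hBC.iSup_inf_eigenspace_mem_invtSubmodule hMC⟩ (iSup_le fun _ => inf_le_left)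

theorem stmt9_general {x : ZMod 4 → Module.End K V} (hq : ¬IsOfFinOrder q)
    (hx : ∀ i, IsQWeyl q (x i) (x (i + 1)))
    (hx0 : ⨆ n, qWeightSpace q c (x 0) n = ⊤) (hx2 : ⨆ n, qWeightSpace q c (x 2) n = ⊤)
    (hirr : ∀ M : Submodule K V, (∀ i, M ∈ (x i).invtSubmodule) → M = ⊥ ∨ M = ⊤)
    {W : Submodule K V} (hW : W ≠ ⊥) (hW0 : W ∈ (x 0).invtSubmodule)
    (hW2 : W ∈ (x 2).invtSubmodule) : W = ⊤ := by
  obtain ⟨M, hMW, hM⟩ := exists_minimal_le_of_wellFoundedLT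
    (fun N => N ≠ ⊥ ∧ N ∈ (x 0).invtSubmodule ⊓ (x 2).invtSubmodule) W ⟨hW, hW0, hW2⟩
  have hM1 : M ∈ (x 1).invtSubmodule :=
    mem_invtSubmodule_of_minimal hq (hx 0) (hx 1) (hx 2) (hx 3) hx0 hx2 hM
  have hM3 : M ∈ (x 3).invtSubmodule :=
    mem_invtSubmodule_of_minimal hq (hx 2) (hx 3) (hx 0) (hx 1) hx2 hx0 (by rwa [inf_comm])
  obtain ⟨hM_ne, hM0, hM2⟩ := hM.prop
  have hM_top : M = ⊤ := (hirr M fun i => by fin_cases i <;> assumption).resolve_left hM_ne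
  exact top_le_iff.mp (hM_top ▸ hMW)

end Square

end QWeyl

section BoxQ

variable {F} {V : Type} [AddCommGroup V] [Module F V]

lemma isQWeyl_bx {q : Fˣ} (π : BoxQ F (q : F) →ₐ[F] Module.End F V) (i : ZMod 4) :
    IsQWeyl q (π (bx F q i)) (π (bx F q (i + 1))) := by
  simpa [IsQWeyl, bx] using congrArg π (RingQuot.mkAlgHom_rel F (BoxRel.rel1 (q := (q : F)) i))

lemma Type1Diam.iSup_qWeightSpace {q : Fˣ} {π : BoxQ F (q : F) →ₐ[F] Module.End F V} {d : ℕ}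
    (hπ : Type1Diam F (q : F) π d) (i : ZMod 4) :
    ⨆ n, qWeightSpace q (q ^ d) (π (bx F q i)) n = ⊤ := by
  obtain ⟨hss, heig⟩ := hπ i
  rw [eq_top_iff, ← hss]
  refine iSup_le fun θ => ?_
  by_cases hθ : θ ∈ EigSet F (π (bx F q i))
  · rw [heig] at hθ
    obtain ⟨n, -, rfl⟩ := hθ
    refine le_iSup_of_le (-n : ℤ) (le_of_eq ?_)
    rw [qWeightSpace, ← zpow_natCast, ← zpow_add, mul_neg, ← sub_eq_add_neg,
      Units.val_zpow_eq_zpow_val]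
  · exact (not_not.mp hθ).trans_le bot_le

lemma mem_invtSubmodule_of_forall_bx {q : F} (π : BoxQ F q →ₐ[F] Module.End F V)
    {M : Submodule F V} (hM : ∀ i, M ∈ (π (bx F q i)).invtSubmodule) (a : BoxQ F q) :
    M ∈ (π a).invtSubmodule := by
  obtain ⟨p, rfl⟩ := RingQuot.mkAlgHom_surjective F (BoxRel F q) a
  induction p using FreeAlgebra.induction with
  | grade0 r =>
    rw [AlgHom.commutes, AlgHom.commutes]
    exact fun v hv => M.smul_mem r hv
  | grade1 i => exact hM i
  | mul a b ha hb =>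
    rw [map_mul, map_mul]
    exact fun v hv => ha (hb hv)
  | add a b ha hb =>
    rw [map_add, map_add]
    exact fun v hv => M.add_mem (ha hv) (hb hv)

lemma IsIrrep.eq_bot_or_eq_top_of_forall_bx {q : F} {π : BoxQ F q →ₐ[F] Module.End F V}
    (hπ : IsIrrep F π) (M : Submodule F V) (hM : ∀ i, M ∈ (π (bx F q i)).invtSubmodule) :
    M = ⊥ ∨ M = ⊤ :=
  hπ.2 M fun a => mem_invtSubmodule_of_forall_bx π hM a

end BoxQ

/-- A nonzero subspace of a type-1 irreducible `□_q`-module invariant under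
`x₀` and `x₂` is the whole module. -/
theorem stmt9 [IsAlgClosed F] [CharZero F] (q : F) (hq0 : q ≠ 0)
    (hq1 : ∀ n : ℕ, 0 < n → q ^ n ≠ 1)
    (V : Type) [AddCommGroup V] [Module F V] [FiniteDimensional F V]
    (π : BoxQ F q →ₐ[F] Module.End F V) (hirr : IsIrrep F π)
    (d : ℕ) (hT : Type1Diam F q π d)
    (W : Submodule F V) (hW : W ≠ ⊥)
    (h0 : ∀ v ∈ W, π (bx F q 0) v ∈ W) (h2 : ∀ v ∈ W, π (bx F q 2) v ∈ W) :
    W = ⊤ := by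
  lift q to Fˣ using hq0.isUnit
  exact stmt9_general (not_isOfFinOrder_of_forall_pow_ne_one hq1) (isQWeyl_bx π)
    (hT.iSup_qWeightSpace 0) (hT.iSup_qWeightSpace 2) hirr.eq_bot_or_eq_top_of_forall_bx hW h0 h2
end
end
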